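/- Let s, t, α be positive integers with 2 ≤ α ≤ 1000, α < s and α < t, and let G be a finite abelian group with line set 𝓛 making (G,𝓛) a proper partial geometry pg(s,t,α) admitting G as an abelian Singer group, such that the pair is of rigid type (axioms (i)–(vi) of the encoding). Then (s,t,α) is one of the five triples (5,5,2), (11,23,3), (39,39,15), (272,272,104), (2295,4591,615). -/

import Mathlib

/-- Encoding of a partial geometry `pg(s,t,α)` whose point set is the abelian group `G`,
admitting `G` (acting by translation) as an abelian Singer group; the lines are the finite
subsets of `G` collected in `𝓛`.  Axioms (i)–(v). -/
structure IsPGSinger (G : Type*) [CommGroup G] [DecidableEq G]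
    (𝓛 : Set (Finset G)) (s t α : ℕ) : Prop where
  /-- (i) every line has exactly `s+1` points -/
  line_card : ∀ L ∈ 𝓛, L.card = s + 1
  /-- (ii) every point lies on exactly `t+1` lines -/
  point_deg : ∀ x : G, {L | L ∈ 𝓛 ∧ x ∈ L}.ncard = t + 1
  /-- (iii) two distinct lines share at most one point -/
  line_inter : ∀ L ∈ 𝓛, ∀ M ∈ 𝓛, L ≠ M → ((L : Set G) ∩ (M : Set G)).ncard ≤ 1
  /-- (iv) for a non-incident point–line pair `(x,L)`, exactly `α` lines through `x` meet `L` -/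
  alpha_ax : ∀ x : G, ∀ L ∈ 𝓛, x ∉ L →
    {M | M ∈ 𝓛 ∧ x ∈ M ∧ ∃ y ∈ L, y ∈ M}.ncard = α
  /-- (v) the line set is closed under translation by elements of `G` -/
  translate : ∀ g : G, ∀ L ∈ 𝓛, L.image (fun y => g * y) ∈ 𝓛

/-- (vi) The pair `(S,G)` is of rigid type: every line has trivial stabilizer in `G`. -/
def RigidType (G : Type*) [CommGroup G] [DecidableEq G] (𝓛 : Set (Finset G)) : Prop :=
  ∀ g : G, ∀ L ∈ 𝓛, L.image (fun y => g * y) = L → g = 1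

/-!
The function `f` sending `g` to the number of lines through `1` and `g` has character sums in
`{0, s + t + 1 - α}` at the nontrivial characters, because the values of `f (x⁻¹ * y)` for `y` on a
line `L` add up to `s + t + 1` if `x ∈ L` and to `α` otherwise. Integrality of the Fourier inversion
formula then makes `δ = s + t + 1 - α` a divisor of `|G|` and of `(s + 1) * (t + 1)`.

Let `H` be a subgroup of index `p ^ k`. The restriction of `f` to `H` has character sums divisible
by `δ / gcd(δ, p ^ k)`. The number of nontrivial characters trivial on `H` at which `f` has
character sum `δ` is stable under Galois conjugation, hence divisible by `p - 1`, and it determines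
the sum of `f` over `H`. Summing `(m - u) * (m - u - 1) ≥ 0` over the reduced character sums `m`
leaves few possibilities for that sum, often none.

By rigidity `t + 1 = n * (s + 1)`. The divisibility `δ ∣ (s + 1) * (t + 1)` then gives positive
integers `a, b, c, β, y` such that, with `x' = β + c * y` and `z = b * x' + c`,
`n = b * y`, `s + 1 = a * z * x'` and `α + 1 = β * a * z`. So `α` bounds all parameters, and the
conditions at the subgroups `H` leave the five triples.
-/

open scoped Finset

section CharacterSums

variable {G : Type*} [CommGroup G]

theorem sum_coe_units_hom_eq_ite [Fintype G] (φ : G →* ℂˣ) [Decidable (φ = 1)] :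
    ∑ g, (φ g : ℂ) = if φ = 1 then (Fintype.card G : ℂ) else 0 := by
  split_ifs with h
  · simp [h]
  · refine sum_hom_units_eq_zero ((Units.coeHom ℂ).comp φ) fun h' => h ?_
    ext g
    simpa using DFunLike.congr_fun h' g

theorem isIntegral_char_apply [Finite G] (χ : G →* ℂˣ) (g : G) : IsIntegral ℤ (χ g : ℂ) := by
  refine IsIntegral.of_pow Nat.card_pos (n := Nat.card G) ?_
  rw [← Units.val_pow_eq_pow_val, ← map_pow, pow_card_eq_one', map_one, Units.val_one]
  exact isIntegral_one

theorem char_inv_apply_eq_conj [Finite G] (χ : G →* ℂˣ) (g : G) :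
    ((χ⁻¹ g : ℂˣ) : ℂ) = starRingEnd ℂ (χ g) := by
  have hone : (χ g : ℂ) ^ Nat.card G = 1 := by
    rw [← Units.val_pow_eq_pow_val, ← map_pow, pow_card_eq_one', map_one, Units.val_one]
  rw [MonoidHom.inv_apply, Units.val_inv_eq_inv_val,
    Complex.inv_eq_conj (Complex.norm_eq_one_of_pow_eq_one hone Nat.card_pos.ne')]

variable [Fintype G]

/-- The Fourier coefficient of `f` at the character `χ`, without normalization. -/
def charSum (f : G → ℤ) (χ : G →* ℂˣ) : ℂ :=
  ∑ g, (f g : ℂ) * χ g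

theorem charSum_one (f : G → ℤ) : charSum f 1 = (∑ g, f g : ℤ) := by
  simp [charSum]

theorem isIntegral_charSum (f : G → ℤ) (χ : G →* ℂˣ) : IsIntegral ℤ (charSum f χ) :=
  IsIntegral.sum _ fun g _ => (isIntegral_algebraMap (x := f g)).mul (isIntegral_char_apply χ g)

theorem charSum_inv (f : G → ℤ) (χ : G →* ℂˣ) :
    charSum f χ⁻¹ = starRingEnd ℂ (charSum f χ) := by
  simp only [charSum, map_sum, map_mul, map_intCast, char_inv_apply_eq_conj]

open Polynomial in
/-- The Galois conjugate of `charSum f χ` under `ζ ↦ ζ ^ j` is `charSum f (χ ^ j)`. -/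
theorem charSum_pow_of_coprime {f : G → ℤ} {χ : G →* ℂˣ} {c : ℤ} (hc : charSum f χ = c)
    {j : ℕ} (hj : j.Coprime (orderOf χ)) : charSum f (χ ^ j) = c := by
  have hn := (isOfFinOrder_of_finite χ).orderOf_pos
  have : NeZero (orderOf χ) := ⟨hn.ne'⟩
  have hζ := Complex.isPrimitiveRoot_exp (orderOf χ) hn.ne'
  set ζ := Complex.exp (2 * Real.pi * Complex.I / orderOf χ)
  have hexp (g : G) : ∃ i, (χ g : ℂ) = ζ ^ i := by
    have hone : (χ g : ℂ) ^ orderOf χ = 1 := by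
      rw [← Units.val_pow_eq_pow_val, ← MonoidHom.pow_apply, pow_orderOf_eq_one,
        MonoidHom.one_apply, Units.val_one]
    obtain ⟨i, -, hi⟩ := hζ.eq_pow_of_pow_eq_one hone
    exact ⟨i, hi.symm⟩
  choose e he using hexp
  let F : ℤ[X] := ∑ g, C (f g) * X ^ e g - C c
  have aeval_F (z : ℂ) : aeval z F = ∑ g, (f g : ℂ) * z ^ e g - c := by simp [F]
  have root_ζ : aeval ζ F = 0 := by
    simp only [aeval_F, ← he, ← hc, charSum, sub_self]
  have root_pow : aeval (ζ ^ j) F = 0 := by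
    have hdvd := minpoly.isIntegrallyClosed_dvd (hζ.isIntegral hn) root_ζ
    rw [hζ.minpoly_eq_pow_coprime hj] at hdvd
    exact aeval_eq_zero_of_dvd_aeval_eq_zero hdvd (minpoly.aeval ℤ _)
  rw [← sub_eq_zero, ← root_pow, aeval_F, charSum]
  simp only [MonoidHom.pow_apply, Units.val_pow_eq_pow_val, he, pow_right_comm]

variable [Fintype (G →* ℂˣ)]

theorem card_characters : Fintype.card (G →* ℂˣ) = Fintype.card G := by
  simpa only [Nat.card_eq_fintype_card] using CommGroup.card_monoidHom_of_hasEnoughRootsOfUnity G ℂ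

theorem sum_char_apply [DecidableEq G] (g : G) :
    ∑ χ : G →* ℂˣ, (χ g : ℂ) = if g = 1 then (Fintype.card G : ℂ) else 0 := by
  classical
  have heval : MonoidHom.eval g = (1 : (G →* ℂˣ) →* ℂˣ) ↔ g = 1 := by
    rw [← CommGroup.forall_apply_eq_apply_iff G (M := ℂ)]
    simp [MonoidHom.ext_iff]
  simpa only [heval, card_characters, MonoidHom.eval_apply_apply] using
    sum_coe_units_hom_eq_ite (MonoidHom.eval g : (G →* ℂˣ) →* ℂˣ)

theorem sum_charSum_mul_char_inv (f : G → ℤ) (g : G) :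
    ∑ χ : G →* ℂˣ, charSum f χ * (χ g⁻¹ : ℂˣ) = Fintype.card G * f g := by
  classical
  simp only [charSum, Finset.sum_mul, mul_assoc, ← Units.val_mul, ← map_mul]
  rw [Finset.sum_comm]
  simp only [← Finset.mul_sum, sum_char_apply, mul_inv_eq_one, mul_ite, mul_zero,
    Finset.sum_ite_eq', Finset.mem_univ, if_true]
  exact mul_comm _ _

theorem sum_charSum (f : G → ℤ) :
    ∑ χ : G →* ℂˣ, charSum f χ = Fintype.card G * f 1 := by
  simpa using sum_charSum_mul_char_inv f 1

theorem sum_charSum_mul_charSum_inv (f : G → ℤ) :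
    ∑ χ : G →* ℂˣ, charSum f χ * charSum f χ⁻¹ = Fintype.card G * (∑ g, f g ^ 2 : ℤ) := by
  have expand (χ : G →* ℂˣ) : charSum f χ * charSum f χ⁻¹ =
      ∑ g, (f g : ℂ) * (charSum f χ * (χ g⁻¹ : ℂˣ)) := by
    rw [charSum.eq_1 f χ⁻¹, Finset.mul_sum]
    refine Finset.sum_congr rfl fun g _ => ?_
    rw [MonoidHom.inv_apply, map_inv]
    ring
  simp only [expand]
  rw [Finset.sum_comm]
  simp only [← Finset.mul_sum, sum_charSum_mul_char_inv]
  push_cast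
  rw [Finset.mul_sum]
  exact Finset.sum_congr rfl fun g _ => by ring

theorem sum_eq_of_charSum_eq_intCast {f : G → ℤ} {c : (G →* ℂˣ) → ℤ}
    (hc : ∀ χ, charSum f χ = c χ) : ∑ χ, c χ = Fintype.card G * f 1 := by
  have h := sum_charSum f
  simp only [hc] at h
  exact_mod_cast h

theorem sum_sq_eq_of_charSum_eq_intCast {f : G → ℤ} {c : (G →* ℂˣ) → ℤ}
    (hc : ∀ χ, charSum f χ = c χ) : ∑ χ, c χ ^ 2 = Fintype.card G * ∑ g, f g ^ 2 := by
  have h := sum_charSum_mul_charSum_inv f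
  simp only [charSum_inv] at h
  simp only [hc, map_intCast, ← sq] at h
  exact_mod_cast h

omit [Fintype (G →* ℂˣ)] in
/-- Sum `(m - u) * (m - (u + 1)) ≥ 0` over the integers `m = charSum f χ / d`, `χ ≠ 1`. -/
theorem charSum_dispersion {f : G → ℤ} {d : ℤ} (hd : ∀ χ : G →* ℂˣ, χ ≠ 1 →
    ∃ m : ℤ, charSum f χ = (d * m : ℤ)) (u : ℤ) :
    d * (2 * u + 1) * (Fintype.card G * f 1 - ∑ g, f g) ≤
      Fintype.card G * ∑ g, f g ^ 2 - (∑ g, f g) ^ 2 +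
        (Fintype.card G - 1) * (d ^ 2 * (u * (u + 1))) := by
  classical
  have := Fintype.ofFinite (G →* ℂˣ)
  have hval (χ : G →* ℂˣ) : ∃ m : ℤ, charSum f χ = m ∧ (χ ≠ 1 → d ∣ m) := by
    by_cases hχ : χ = 1
    · exact ⟨_, hχ ▸ charSum_one f, fun h => (h hχ).elim⟩
    · obtain ⟨m, hm⟩ := hd χ hχ
      exact ⟨_, hm, fun _ => dvd_mul_right d m⟩
  choose c hc hdvd using hval
  have hone : c 1 = ∑ g, f g := by exact_mod_cast (hc 1).symm.trans (charSum_one f)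
  have hnonneg (χ : G →* ℂˣ) (hχ : χ ∈ Finset.univ.erase 1) :
      0 ≤ c χ ^ 2 - d * (2 * u + 1) * c χ + d ^ 2 * (u * (u + 1)) := by
    obtain ⟨m, hm⟩ := hdvd χ (Finset.ne_of_mem_erase hχ)
    have hgap : 0 ≤ (m - u) * (m - (u + 1)) := by
      rcases le_or_gt m u with h | h
      · exact mul_nonneg_of_nonpos_of_nonpos (by omega) (by omega)
      · exact mul_nonneg (by omega) (by omega)
    calc 0 ≤ d ^ 2 * ((m - u) * (m - (u + 1))) := mul_nonneg (sq_nonneg d) hgap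
      _ = _ := by rw [hm]; ring
  have hcard : ((Finset.univ.erase (1 : G →* ℂˣ)).card : ℤ) = Fintype.card G - 1 := by
    rw [Finset.cast_card_erase_of_mem (Finset.mem_univ _), Finset.card_univ, card_characters]
  have hadd (F : (G →* ℂˣ) → ℤ) : ∑ χ ∈ Finset.univ.erase 1, F χ = ∑ χ, F χ - F 1 :=
    Finset.sum_erase_eq_sub (Finset.mem_univ _)
  have htotal := Finset.sum_nonneg hnonneg
  rw [Finset.sum_add_distrib, Finset.sum_sub_distrib, ← Finset.mul_sum, Finset.sum_const,
    nsmul_eq_mul, hcard, hadd, hadd,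
    sum_eq_of_charSum_eq_intCast hc, sum_sq_eq_of_charSum_eq_intCast hc, hone] at htotal
  linarith

end CharacterSums

section Counting

theorem dvd_card_of_forall_dvd_card_fiber {ι κ : Type*} [DecidableEq κ] (f : ι → κ)
    {S : Finset ι} {m : ℕ} (h : ∀ a ∈ S, m ∣ #{b ∈ S | f b = f a}) : m ∣ #S := by
  rw [Finset.card_eq_sum_card_image f S]
  refine Finset.dvd_sum fun c hc => ?_
  obtain ⟨a, ha, rfl⟩ := Finset.mem_image.1 hc
  exact h a ha

theorem card_filter_zpowers_eq {A : Type*} [Group A] [Fintype A] (b : A)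
    [DecidablePred fun a : A => Subgroup.zpowers a = Subgroup.zpowers b] :
    #{a | Subgroup.zpowers a = Subgroup.zpowers b} = (orderOf b).totient := by
  classical
  rw [← IsCyclic.card_orderOf_eq_totient (α := Subgroup.zpowers b)
    (dvd_of_eq Fintype.card_zpowers.symm), ← Finset.card_map (.subtype _)]
  congr 1
  ext a
  simp only [Finset.mem_filter, Finset.mem_univ, true_and, Finset.mem_map,
    Function.Embedding.subtype_apply, Subtype.exists, exists_and_left, exists_prop,
    exists_eq_right_right, ← Subgroup.orderOf_coe]
  constructor
  · exact fun h => ⟨by rw [← Nat.card_zpowers, h, Nat.card_zpowers], h ▸ Subgroup.mem_zpowers a⟩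
  · rintro ⟨h, ha⟩
    exact Subgroup.eq_of_le_of_card_ge (Subgroup.zpowers_le.2 ha)
      (by rw [Nat.card_zpowers, Nat.card_zpowers, h])

theorem exists_coprime_pow_eq_of_zpowers_eq {A : Type*} [Group A] [Finite A] {a b : A}
    (h : Subgroup.zpowers a = Subgroup.zpowers b) :
    ∃ j : ℕ, j.Coprime (orderOf b) ∧ b ^ j = a := by
  obtain ⟨j, rfl⟩ := mem_powers_iff_mem_zpowers.2 (h ▸ Subgroup.mem_zpowers a)
  exact ⟨j, mem_zpowers_pow_iff.1 (h ▸ Subgroup.mem_zpowers b), rfl⟩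

theorem dvd_card_of_pow_mem {A : Type*} [Group A] [Finite A] {S : Finset A} {m : ℕ}
    (hpow : ∀ a ∈ S, ∀ j : ℕ, j.Coprime (orderOf a) → a ^ j ∈ S)
    (hm : ∀ a ∈ S, m ∣ (orderOf a).totient) : m ∣ #S := by
  classical
  have := Fintype.ofFinite A
  refine dvd_card_of_forall_dvd_card_fiber Subgroup.zpowers fun b hb => ?_
  have fiber : {a ∈ S | Subgroup.zpowers a = Subgroup.zpowers b} =
      ({a | Subgroup.zpowers a = Subgroup.zpowers b} : Finset A) := by
    ext a
    simp only [Finset.mem_filter, Finset.mem_univ, true_and, and_iff_right_iff_imp]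
    intro h
    obtain ⟨j, hj, rfl⟩ := exists_coprime_pow_eq_of_zpowers_eq h
    exact hpow b hb j hj
  rw [fiber, card_filter_zpowers_eq]
  exact hm b hb

theorem sub_one_dvd_totient_of_dvd_prime_pow {p k n : ℕ} (hp : p.Prime) (hn : n ∣ p ^ k)
    (hn1 : n ≠ 1) : p - 1 ∣ n.totient := by
  obtain ⟨i, -, rfl⟩ := (Nat.dvd_prime_pow hp).1 hn
  have hi : i ≠ 0 := fun h => hn1 (h ▸ pow_zero p)
  exact ⟨_, (Nat.totient_prime_pow hp (Nat.pos_of_ne_zero hi)).trans (mul_comm _ _)⟩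

end Counting

section Restriction

variable {G : Type*} [CommGroup G]

theorem exists_subgroup_index_eq_prime_pow [Finite G] {p k : ℕ} (hp : p.Prime)
    (h : p ^ k ∣ Nat.card G) : ∃ H : Subgroup G, H.index = p ^ k := by
  have := Fact.mk hp
  rw [← CommGroup.card_monoidHom_of_hasEnoughRootsOfUnity G ℂ] at h
  obtain ⟨Φ, hΦ⟩ := Sylow.exists_subgroup_card_pow_prime p h
  let e := CommGroup.subgroupOrderIsoSubgroupMonoidHom G ℂ
  have hindex := CommGroup.card_subgroupOrderIsoSubgroupMonoidHom ℂ (e.symm (OrderDual.toDual Φ))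
  rw [e.apply_symm_apply] at hindex
  exact ⟨e.symm (OrderDual.toDual Φ), hindex.symm.trans hΦ⟩

theorem orderOf_dvd_index_of_domRestrict_eq_one [Finite G] {H : Subgroup G} {χ : G →* ℂˣ}
    (h : χ.domRestrict H = 1) : orderOf χ ∣ H.index := by
  rw [Subgroup.index, ← CommGroup.card_domRestrictHom_ker ℂ]
  exact Subgroup.orderOf_dvd_natCard _ (MonoidHom.mem_ker.2 h)

variable (H : Subgroup G) [Fintype (G →* ℂˣ)] [DecidableEq (H →* ℂˣ)]

theorem sum_filter_domRestrict_eq_one_apply [Finite G] (g : G) [Decidable (g ∈ H)] :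
    ∑ χ : G →* ℂˣ with χ.domRestrict H = 1, (χ g : ℂ) = if g ∈ H then (H.index : ℂ) else 0 := by
  classical
  let K := (MonoidHom.domRestrictHom H ℂˣ).ker
  let ev : K →* ℂˣ := (MonoidHom.eval g).comp K.subtype
  have hev : ev = 1 ↔ g ∈ H := by
    rw [← CommGroup.forall_monoidHom_apply_eq_one_iff ℂ H g]
    simp [K, ev, MonoidHom.ext_iff, MonoidHom.mem_ker]
  have hcard : Fintype.card K = H.index := by
    rw [← Nat.card_eq_fintype_card, CommGroup.card_domRestrictHom_ker, Subgroup.index]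
  rw [Finset.sum_subtype (p := (· ∈ K)) _ (by simp [K, MonoidHom.mem_ker]) fun χ => (χ g : ℂ)]
  simpa only [hev, hcard] using! sum_coe_units_hom_eq_ite ev

theorem card_filter_domRestrict_eq_one [Finite G] :
    #{χ : G →* ℂˣ | χ.domRestrict H = 1} = H.index := by
  classical
  have h := sum_filter_domRestrict_eq_one_apply H 1
  simp only [map_one, Units.val_one, Finset.sum_const, nsmul_eq_mul, mul_one, one_mem, if_true] at h
  exact_mod_cast h

theorem sum_filter_domRestrict_eq_apply [Finite G] (χ₀ : G →* ℂˣ) (g : G)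
    [Decidable (g ∈ H)] :
    ∑ χ : G →* ℂˣ with χ.domRestrict H = χ₀.domRestrict H, (χ g : ℂ) =
      if g ∈ H then (H.index * χ₀ g : ℂ) else 0 := by
  have hshift : ∑ χ : G →* ℂˣ with χ.domRestrict H = χ₀.domRestrict H, (χ g : ℂ) =
      χ₀ g * ∑ χ : G →* ℂˣ with χ.domRestrict H = 1, (χ g : ℂ) := by
    rw [Finset.mul_sum, Finset.sum_filter, Finset.sum_filter]
    refine Fintype.sum_equiv (Equiv.mulLeft χ₀⁻¹) _ _ fun χ => ?_
    have hiff : (χ₀⁻¹ * χ).domRestrict H = 1 ↔ χ.domRestrict H = χ₀.domRestrict H := by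
      rw [← MonoidHom.domRestrictHom_apply, ← MonoidHom.domRestrictHom_apply, map_mul, map_inv,
        inv_mul_eq_one, eq_comm]
      rfl
    simp [hiff]
  rw [hshift, sum_filter_domRestrict_eq_one_apply, mul_ite, mul_zero, mul_comm]

theorem sum_charSum_filter_domRestrict [Fintype G] [Fintype H] (f : G → ℤ) (η : H →* ℂˣ) :
    ∑ χ : G →* ℂˣ with χ.domRestrict H = η, charSum f χ =
      H.index * charSum (fun h : H => f h) η := by
  classical
  obtain ⟨χ₀, rfl⟩ := MonoidHom.domRestrict_surjective ℂ H η
  simp only [charSum]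
  rw [Finset.sum_comm]
  simp only [← Finset.mul_sum, MonoidHom.domRestrictHom_apply, sum_filter_domRestrict_eq_apply,
    mul_ite, mul_zero]
  rw [← Finset.sum_filter, Finset.sum_subtype (p := (· ∈ H)) _ (by simp), Finset.mul_sum]
  exact Finset.sum_congr rfl fun h _ => mul_left_comm _ _ _

end Restriction

section TwoValued

variable {G : Type*} [CommGroup G] [Fintype G]

/-- The spectrum of `f` on the nontrivial characters is contained in `{0, δ}`. For the function
counting the lines of a partial geometry through two points, `δ = s + t + 1 - α`. -/
def HasTwoValuedSpectrum (f : G → ℤ) (δ : ℕ) : Prop :=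
  ∀ χ : G →* ℂˣ, χ ≠ 1 → charSum f χ = 0 ∨ charSum f χ = δ

theorem intCast_dvd_of_eq_mul_isIntegral {n d : ℤ} {z : ℂ} (hz : IsIntegral ℤ z)
    (h : (n : ℂ) = d * z) : d ∣ n := by
  rcases eq_or_ne d 0 with rfl | hd
  · rw [Int.cast_zero, zero_mul, Int.cast_eq_zero] at h
    exact h ▸ dvd_rfl
  · obtain ⟨k, rfl⟩ := hz.exists_int_iff_exists_rat.1
      ⟨n / d, by push_cast; rw [h]; field_simp⟩
    exact ⟨k, by exact_mod_cast h⟩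

theorem exists_eq_div_gcd_mul_of_mul_eq_mul {a b m n : ℕ} (ha : 0 < a) (h : a * m = b * n) :
    ∃ j, m = b / b.gcd a * j ∧ n = a / b.gcd a * j := by
  have hg := Nat.gcd_pos_of_pos_right b ha
  have ha' := Nat.mul_div_cancel' (Nat.gcd_dvd_right b a)
  have hb' := Nat.mul_div_cancel' (Nat.gcd_dvd_left b a)
  have hred : a / b.gcd a * m = b / b.gcd a * n := by
    refine Nat.eq_of_mul_eq_mul_left hg ?_
    rw [← mul_assoc, ← mul_assoc, ha', hb', h]
  obtain ⟨j, rfl⟩ := (Nat.coprime_div_gcd_div_gcd hg).symm.dvd_of_dvd_mul_left ⟨m, hred.symm⟩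
  have ha_pos : 0 < a / b.gcd a := Nat.div_pos (Nat.gcd_le_right b ha) hg
  exact ⟨j, Nat.eq_of_mul_eq_mul_left ha_pos (hred.trans (mul_left_comm _ _ _)), rfl⟩

namespace HasTwoValuedSpectrum

variable {f : G → ℤ} {δ : ℕ} (hf : HasTwoValuedSpectrum f δ)
include hf

open scoped Classical in
theorem sum_charSum_mul {S : Finset (G →* ℂˣ)} (hS : 1 ∉ S) (z : (G →* ℂˣ) → ℂ) :
    ∑ χ ∈ S, charSum f χ * z χ = δ * ∑ χ ∈ S with charSum f χ = δ, z χ := by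
  rw [Finset.mul_sum, Finset.sum_filter]
  refine Finset.sum_congr rfl fun χ hχ => ?_
  split_ifs with h
  · rw [h]
  · rw [(hf χ (ne_of_mem_of_not_mem hχ hS)).resolve_right h, zero_mul]

open scoped Classical in
theorem sum_charSum {S : Finset (G →* ℂˣ)} (hS : 1 ∉ S) :
    ∑ χ ∈ S, charSum f χ = δ * #{χ ∈ S | charSum f χ = δ} := by
  simpa using hf.sum_charSum_mul hS 1

theorem dvd_card_mul_sub_sum (g : G) : (δ : ℤ) ∣ Fintype.card G * f g - ∑ x, f x := by
  classical
  have := Fintype.ofFinite (G →* ℂˣ)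
  have hz : IsIntegral ℤ (∑ χ : G →* ℂˣ with χ ≠ 1 ∧ charSum f χ = δ, (χ g⁻¹ : ℂ)) :=
    IsIntegral.sum _ fun χ _ => isIntegral_char_apply χ g⁻¹
  refine intCast_dvd_of_eq_mul_isIntegral hz ?_
  have h := sum_charSum_mul_char_inv f g
  rw [← Finset.add_sum_erase _ _ (Finset.mem_univ 1), charSum_one,
    hf.sum_charSum_mul (Finset.notMem_erase _ _), ← Finset.filter_ne', Finset.filter_filter] at h
  push_cast at h ⊢
  rw [← h]
  simp

theorem exists_charSum_subgroup_eq {H : Subgroup G} [Fintype H] {η : H →* ℂˣ} (hη : η ≠ 1) :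
    ∃ m : ℤ, charSum (fun h : H => f h) η = ((δ / δ.gcd H.index : ℕ) * m : ℤ) := by
  classical
  have := Fintype.ofFinite (G →* ℂˣ)
  have hindex : H.index ≠ 0 := Subgroup.index_ne_zero_of_finite
  obtain ⟨a, ha⟩ : ∃ a : ℕ, H.index * charSum (fun h : H => f h) η = δ * a := by
    rw [← sum_charSum_filter_domRestrict, hf.sum_charSum]
    · exact ⟨_, rfl⟩
    · exact fun h => hη (Finset.mem_filter.1 h).2.symm
  obtain ⟨c, hc⟩ := (isIntegral_charSum (fun h : H => f h) η).exists_int_iff_exists_rat.1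
    ⟨δ * a / H.index, by push_cast; rw [← ha]; field_simp⟩
  rw [hc] at ha ⊢
  have hac : H.index * c.natAbs = δ * a := by
    have h : (H.index * c : ℤ) = δ * a := by exact_mod_cast ha
    simpa [Int.natAbs_mul] using congrArg Int.natAbs h
  obtain ⟨j, hj, -⟩ := exists_eq_div_gcd_mul_of_mul_eq_mul (Nat.pos_of_ne_zero hindex) hac
  obtain ⟨m, rfl⟩ := Int.natCast_dvd.2 ⟨j, hj⟩
  exact ⟨m, rfl⟩

theorem exists_index_mul_sum_subgroup_eq {p k : ℕ} (hp : p.Prime) {H : Subgroup G} [Fintype H]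
    (hH : H.index = p ^ k) :
    ∃ a < p ^ k, p - 1 ∣ a ∧ p ^ k * ∑ h : H, f h = ∑ g, f g + δ * a := by
  classical
  have := Fintype.ofFinite (G →* ℂˣ)
  let K : Finset (G →* ℂˣ) := {χ | χ.domRestrict H = 1}
  have hK : 1 ∈ K := by simp [K]
  have hcard : #K = p ^ k := hH ▸ card_filter_domRestrict_eq_one H
  have hmem (χ : G →* ℂˣ) : χ ∈ {χ ∈ K.erase 1 | charSum f χ = δ} ↔
      (χ ≠ 1 ∧ χ.domRestrict H = 1) ∧ charSum f χ = (δ : ℤ) := by simp [K]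
  refine ⟨#{χ ∈ K.erase 1 | charSum f χ = δ}, ?_, ?_, ?_⟩
  · calc _ ≤ #(K.erase 1) := Finset.card_filter_le _ _
      _ < p ^ k := hcard ▸ Finset.card_erase_lt_of_mem hK
  · refine dvd_card_of_pow_mem (fun χ hχ j hj => ?_) fun χ hχ => ?_
    · obtain ⟨⟨hne, hres⟩, hval⟩ := (hmem χ).1 hχ
      refine (hmem _).2 ⟨⟨fun h => hne ?_, ?_⟩, charSum_pow_of_coprime hval hj⟩
      · exact (pow_eq_one_iff_of_coprime hj).1 ⟨h, pow_orderOf_eq_one χ⟩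
      · rw [← MonoidHom.domRestrictHom_apply, map_pow, MonoidHom.domRestrictHom_apply, hres,
          one_pow]
    · obtain ⟨⟨hne, hres⟩, -⟩ := (hmem χ).1 hχ
      have horder := hH ▸ orderOf_dvd_index_of_domRestrict_eq_one hres
      exact sub_one_dvd_totient_of_dvd_prime_pow hp horder (mt orderOf_eq_one_iff.1 hne)
  · have h := sum_charSum_filter_domRestrict H f 1
    rw [charSum_one, hH, ← Finset.add_sum_erase _ _ hK, charSum_one,
      hf.sum_charSum (Finset.notMem_erase _ _)] at h
    exact_mod_cast h.symm

end HasTwoValuedSpectrum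

end TwoValued

section SubgroupCondition

/-- The consequence of `charSum_dispersion` for a function with values in `{0, 1}` off the
identity, where it is `T`, of total sum `K` on a group of order `Q`, whose nontrivial character
sums are multiples of `π`. -/
def DispersionBound (T Q π K u : ℕ) : Prop :=
  π * (2 * u + 1) * (Q * T) + K ^ 2 + Q * T + π ^ 2 * (u * (u + 1)) ≤
    Q * (T ^ 2 + K + π ^ 2 * (u * (u + 1))) + π * (2 * u + 1) * K

/-- Necessary condition for a function on a group of order `v`, with spectrum in `{0, δ}` and total
sum `δ * w`, to have a restriction to a subgroup of index `P`, a power of the prime `p`. The sum of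
the restriction is `δ / δ.gcd P * j`, and `P / δ.gcd P * j - w` counts the nontrivial characters
which are trivial on the subgroup and at which the spectrum is `δ`. -/
def SubgroupCondition (T w δ v p P : ℕ) : Prop :=
  ∃ j, w ≤ P / δ.gcd P * j ∧ P / δ.gcd P * j < w + P ∧ p - 1 ∣ P / δ.gcd P * j - w ∧
    ∀ u, DispersionBound T (v / P) (δ / δ.gcd P) (δ / δ.gcd P * j) u

variable {G : Type*} [CommGroup G] [Fintype G]

theorem dispersionBound_of_charSum {f : G → ℤ} {T π K : ℕ} (h1 : f 1 = T)
    (hidem : ∀ g ≠ 1, f g ^ 2 = f g) (hsum : ∑ g, f g = K)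
    (hπ : ∀ χ : G →* ℂˣ, χ ≠ 1 → ∃ m : ℤ, charSum f χ = (π * m : ℤ)) (u : ℕ) :
    DispersionBound T (Fintype.card G) π K u := by
  classical
  have hsq : ∑ g, f g ^ 2 = T ^ 2 + K - T := by
    rw [← hsum, ← Finset.add_sum_erase _ _ (Finset.mem_univ 1),
      ← Finset.add_sum_erase _ f (Finset.mem_univ 1), h1,
      Finset.sum_congr rfl fun g hg => hidem g (Finset.ne_of_mem_erase hg)]
    ring
  have h := charSum_dispersion hπ u
  rw [hsq, hsum, h1] at h
  rw [DispersionBound]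
  zify
  linarith

theorem HasTwoValuedSpectrum.subgroupCondition {f : G → ℤ} {T w δ p k : ℕ}
    (hf : HasTwoValuedSpectrum f δ) (h1 : f 1 = T) (hidem : ∀ g ≠ 1, f g ^ 2 = f g)
    (hsum : ∑ g, f g = δ * w) (hp : p.Prime) (hdvd : p ^ k ∣ Fintype.card G) :
    SubgroupCondition T w δ (Fintype.card G) p (p ^ k) := by
  classical
  have hP : 0 < p ^ k := pow_pos hp.pos k
  obtain ⟨H, hH⟩ := exists_subgroup_index_eq_prime_pow hp (Nat.card_eq_fintype_card (α := G) ▸ hdvd)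
  obtain ⟨a, ha_lt, ha_dvd, ha⟩ := hf.exists_index_mul_sum_subgroup_eq hp hH
  have hcard : Fintype.card H = Fintype.card G / p ^ k := by
    rw [← hH, ← Nat.card_eq_fintype_card, ← Nat.card_eq_fintype_card, ← H.card_mul_index,
      Nat.mul_div_cancel _ (hH ▸ hP)]
  rw [hsum, ← mul_add] at ha
  obtain ⟨K, hK⟩ : ∃ K : ℕ, ∑ h : H, f h = K :=
    Int.eq_ofNat_of_zero_le <| (mul_nonneg_iff_of_pos_left (by exact_mod_cast hP)).1 <|
      ha ▸ (by positivity : (0 : ℤ) ≤ δ * (w + a))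
  have hmul : p ^ k * K = δ * (w + a) := by
    rw [hK] at ha
    exact_mod_cast ha
  obtain ⟨j, rfl, hj⟩ := exists_eq_div_gcd_mul_of_mul_eq_mul hP hmul
  refine ⟨j, hj ▸ Nat.le_add_right w a, by omega, ?_, fun u => ?_⟩
  · rwa [← hj, Nat.add_sub_cancel_left]
  · rw [← hcard]
    exact dispersionBound_of_charSum (f := fun h : H => f h) h1
      (fun h hh => hidem h (by simpa using hh)) hK
      (fun η hη => hH ▸ hf.exists_charSum_subgroup_eq hη) u

end SubgroupCondition

section LineCount

variable {G : Type*} [DecidableEq G]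

/-- The number of members of `𝓕` which contain both `x` and `y`. -/
def lineCount (𝓕 : Finset (Finset G)) (x y : G) : ℕ :=
  #{L ∈ 𝓕 | x ∈ L ∧ y ∈ L}

theorem lineCount_comm (𝓕 : Finset (Finset G)) (x y : G) :
    lineCount 𝓕 x y = lineCount 𝓕 y x := by
  simp only [lineCount, and_comm]

theorem lineCount_pos {𝓕 : Finset (Finset G)} {L : Finset G} {x y : G} (hL : L ∈ 𝓕) (hx : x ∈ L)
    (hy : y ∈ L) : 0 < lineCount 𝓕 x y :=
  Finset.card_pos.2 ⟨L, Finset.mem_filter.2 ⟨hL, hx, hy⟩⟩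

theorem sum_lineCount (𝓕 : Finset (Finset G)) (S : Finset G) (x : G) :
    ∑ y ∈ S, lineCount 𝓕 x y = ∑ M ∈ 𝓕 with x ∈ M, #(S ∩ M) := by
  simp only [lineCount, ← Finset.filter_filter, ← Finset.filter_mem_eq_inter]
  exact Finset.sum_card_bipartiteAbove_eq_sum_card_bipartiteBelow (fun y M => y ∈ M)

theorem charSum_lineCount [CommGroup G] [Fintype G] (𝓕 : Finset (Finset G)) (χ : G →* ℂˣ) :
    charSum (fun g => lineCount 𝓕 1 g) χ = ∑ M ∈ 𝓕 with 1 ∈ M, ∑ y ∈ M, (χ y : ℂ) := by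
  simp only [charSum, lineCount, ← Finset.filter_filter, Int.cast_natCast]
  simp only [Finset.natCast_card_filter, Finset.sum_mul]
  rw [Finset.sum_comm]
  simp only [ite_mul, one_mul, zero_mul, Finset.sum_ite_mem, Finset.univ_inter]

end LineCount

namespace IsPGSinger

open scoped Pointwise

variable {G : Type*} [CommGroup G] [DecidableEq G] {𝓕 : Finset (Finset G)} {s t α : ℕ}
  (h : IsPGSinger G (𝓕 : Set (Finset G)) s t α)
include h

theorem smul_mem {L : Finset G} (hL : L ∈ 𝓕) (g : G) : g • L ∈ 𝓕 :=
  h.translate g L hL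

theorem card_filter_mem (x : G) : #{L ∈ 𝓕 | x ∈ L} = t + 1 := by
  rw [← h.point_deg x, ← Set.ncard_coe_finset, Finset.coe_filter]
  simp only [Finset.mem_coe]

theorem card_inter_le_one {L M : Finset G} (hL : L ∈ 𝓕) (hM : M ∈ 𝓕) (hne : L ≠ M) :
    #(L ∩ M) ≤ 1 := by
  rw [← Set.ncard_coe_finset, Finset.coe_inter]
  exact h.line_inter L hL M hM hne

theorem card_filter_meets {L : Finset G} {x : G} (hL : L ∈ 𝓕) (hx : x ∉ L) :
    #{M ∈ 𝓕 | x ∈ M ∧ (L ∩ M).Nonempty} = α := by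
  rw [← h.alpha_ax x L hL hx, ← Set.ncard_coe_finset, Finset.coe_filter]
  simp only [Finset.mem_coe, Finset.Nonempty, Finset.mem_inter]

theorem exists_mem_line (x : G) : ∃ L ∈ 𝓕, x ∈ L := by
  have hpos : 0 < #{L ∈ 𝓕 | x ∈ L} := h.card_filter_mem x ▸ t.succ_pos
  exact Finset.filter_nonempty_iff.1 (Finset.card_pos.1 hpos)

theorem lineCount_self (x : G) : lineCount 𝓕 x x = t + 1 := by
  simpa only [lineCount, and_self] using h.card_filter_mem x

theorem lineCount_le_one {x y : G} (hxy : x ≠ y) : lineCount 𝓕 x y ≤ 1 := by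
  rw [lineCount, Finset.card_le_one]
  simp only [Finset.mem_filter]
  rintro L ⟨hL, hxL, hyL⟩ M ⟨hM, hxM, hyM⟩
  by_contra hne
  exact hxy <| Finset.card_le_one.1 (h.card_inter_le_one hL hM hne) _
    (Finset.mem_inter.2 ⟨hxL, hxM⟩) _ (Finset.mem_inter.2 ⟨hyL, hyM⟩)

theorem lineCount_mul_left (g x y : G) : lineCount 𝓕 (g * x) (g * y) = lineCount 𝓕 x y := by
  simp only [lineCount, ← smul_eq_mul]
  refine Finset.card_nbij' (g⁻¹ • ·) (g • ·) (fun L hL => ?_) (fun L hL => ?_)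
    (fun L _ => smul_inv_smul g L) (fun L _ => inv_smul_smul g L)
  · simp only [Finset.coe_filter, Set.mem_ofPred_eq, Finset.mem_inv_smul_finset_iff] at hL ⊢
    exact ⟨h.smul_mem hL.1 _, hL.2⟩
  · simp only [Finset.coe_filter, Set.mem_ofPred_eq, Finset.smul_mem_smul_finset_iff] at hL ⊢
    exact ⟨h.smul_mem hL.1 _, hL.2⟩

theorem lineCount_eq_lineCount_one (x y : G) : lineCount 𝓕 x y = lineCount 𝓕 1 (x⁻¹ * y) := by
  rw [← h.lineCount_mul_left x⁻¹ x y, inv_mul_cancel]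

theorem sum_lineCount_of_mem {L : Finset G} (hL : L ∈ 𝓕) {x : G} (hx : x ∈ L) :
    ∑ y ∈ L, lineCount 𝓕 x y = s + t + 1 := by
  have hmem : L ∈ {M ∈ 𝓕 | x ∈ M} := Finset.mem_filter.2 ⟨hL, hx⟩
  have hone : ∀ M ∈ {M ∈ 𝓕 | x ∈ M}.erase L, #(L ∩ M) = 1 := by
    intro M hM
    obtain ⟨hne, hM, hxM⟩ : M ≠ L ∧ M ∈ 𝓕 ∧ x ∈ M := by simpa using hM
    exact le_antisymm (h.card_inter_le_one hL hM hne.symm)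
      (Finset.card_pos.2 ⟨x, Finset.mem_inter.2 ⟨hx, hxM⟩⟩)
  rw [sum_lineCount, ← Finset.add_sum_erase _ _ hmem, Finset.inter_self, h.line_card L hL,
    Finset.sum_congr rfl hone, Finset.sum_const, Finset.card_erase_of_mem hmem, h.card_filter_mem]
  simp only [Nat.add_sub_cancel, smul_eq_mul, mul_one]
  ring

theorem sum_lineCount_of_notMem {L : Finset G} (hL : L ∈ 𝓕) {x : G} (hx : x ∉ L) :
    ∑ y ∈ L, lineCount 𝓕 x y = α := by
  rw [sum_lineCount, ← h.card_filter_meets hL hx, ← Finset.filter_filter, Finset.card_filter]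
  refine Finset.sum_congr rfl fun M hM => ?_
  obtain ⟨hM, hxM⟩ := Finset.mem_filter.1 hM
  have hle := h.card_inter_le_one hL hM (by rintro rfl; exact hx hxM)
  split_ifs with hmeet
  · exact le_antisymm hle (Finset.card_pos.2 hmeet)
  · rw [Finset.not_nonempty_iff_eq_empty.1 hmeet, Finset.card_empty]

theorem exists_notMem_line (hs : 0 < s) (ht : 0 < t) : ∃ L ∈ 𝓕, ∃ x, x ∉ L := by
  have hcard : 1 < #{L ∈ 𝓕 | 1 ∈ L} := by
    rw [h.card_filter_mem]
    exact Nat.succ_lt_succ ht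
  obtain ⟨L, hL, M, hM, hne⟩ := Finset.one_lt_card.1 hcard
  simp only [Finset.mem_filter] at hL hM
  refine ⟨L, hL.1, not_forall.1 fun hall => ?_⟩
  have hle := h.card_inter_le_one hL.1 hM.1 hne
  rw [Finset.inter_eq_right.2 fun x _ => hall x, h.line_card M hM.1] at hle
  exact absurd (Nat.le_of_succ_le_succ hle) hs.not_ge

theorem exists_lineCount_eq_zero (ht : 0 < t) (hαs : α < s) :
    ∃ g, lineCount 𝓕 1 g = 0 := by
  obtain ⟨L, hL, x, hx⟩ := h.exists_notMem_line (by omega) ht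
  suffices ∃ y ∈ L, lineCount 𝓕 x y < 1 by
    obtain ⟨y, -, hy⟩ := this
    exact ⟨x⁻¹ * y, by rwa [← h.lineCount_eq_lineCount_one, ← Nat.lt_one_iff]⟩
  refine Finset.exists_lt_of_sum_lt ?_
  rw [h.sum_lineCount_of_notMem hL hx, Finset.sum_const, h.line_card L hL, smul_eq_mul]
  omega

theorem exists_lineCount_eq_one (hs : 0 < s) : ∃ g, lineCount 𝓕 1 g = 1 := by
  obtain ⟨L, hL, hL1⟩ := h.exists_mem_line 1
  have hcard : 1 < #L := h.line_card L hL ▸ Nat.succ_lt_succ hs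
  obtain ⟨g, hg, hne⟩ := Finset.exists_mem_ne hcard 1
  exact ⟨g, le_antisymm (h.lineCount_le_one hne.symm) (lineCount_pos hL hL1 hg)⟩

theorem succ_dvd_succ_of_rigidType (hrig : RigidType G (𝓕 : Set (Finset G))) : s + 1 ∣ t + 1 := by
  classical
  rw [← h.card_filter_mem 1]
  refine dvd_card_of_forall_dvd_card_fiber (MulAction.orbit G) fun L hL => ?_
  obtain ⟨hL, -⟩ := Finset.mem_filter.1 hL
  rw [← h.line_card L hL]
  have hfiber : {M ∈ {M ∈ 𝓕 | 1 ∈ M} | MulAction.orbit G M = MulAction.orbit G L} =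
      L.image fun l => l⁻¹ • L := by
    ext M
    simp only [Finset.mem_filter, Finset.mem_image, MulAction.orbit_eq_iff]
    constructor
    · rintro ⟨⟨-, hM1⟩, g, rfl⟩
      exact ⟨g⁻¹, by simpa using Finset.inv_smul_mem_iff.2 hM1, by rw [inv_inv]⟩
    · rintro ⟨l, hl, rfl⟩
      exact ⟨⟨h.smul_mem hL _, by simpa [Finset.mem_inv_smul_finset_iff] using hl⟩, l⁻¹, rfl⟩
  rw [hfiber, Finset.card_image_of_injOn]
  intro l _ m _ hlm
  refine (mul_inv_eq_one.1 (hrig (m * l⁻¹) L hL ?_)).symm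
  change (m * l⁻¹) • L = L
  rw [mul_smul]
  exact (congrArg (m • ·) hlm).trans (smul_inv_smul m L)

theorem sum_lineCount_eq_add_ite (hα : α ≤ s) {L : Finset G} (hL : L ∈ 𝓕) (x : G) :
    ∑ y ∈ L, lineCount 𝓕 x y = α + if x ∈ L then s + t + 1 - α else 0 := by
  split_ifs with hx
  · rw [h.sum_lineCount_of_mem hL hx]
    omega
  · rw [h.sum_lineCount_of_notMem hL hx, add_zero]

section Finite

variable [Fintype G]

theorem sum_univ_lineCount (x : G) : ∑ y, lineCount 𝓕 x y = (s + 1) * (t + 1) := by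
  rw [sum_lineCount]
  simp only [Finset.univ_inter]
  rw [Finset.sum_congr rfl fun M hM => h.line_card M (Finset.mem_filter.1 hM).1, Finset.sum_const,
    h.card_filter_mem, smul_eq_mul, mul_comm]

theorem mul_card_eq (hα : α ≤ s) : α * Fintype.card G = (s + 1) * (s * t + α) := by
  obtain ⟨L, hL, -⟩ := h.exists_mem_line 1
  have hcount : ∑ x, ∑ y ∈ L, lineCount 𝓕 x y = (s + 1) * ((s + 1) * (t + 1)) := by
    rw [Finset.sum_comm]
    simp only [lineCount_comm 𝓕 _, h.sum_univ_lineCount]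
    rw [Finset.sum_const, h.line_card L hL, smul_eq_mul]
  simp only [h.sum_lineCount_eq_add_ite hα hL, Finset.sum_add_distrib, Finset.sum_const,
    Finset.card_univ, Finset.sum_ite_mem, Finset.univ_inter, h.line_card L hL, smul_eq_mul]
    at hcount
  obtain ⟨r, rfl⟩ := Nat.exists_eq_add_of_le hα
  rw [show α + r + t + 1 - α = r + t + 1 by omega] at hcount
  linarith

theorem sum_char_mul_charSum_lineCount (hα : α ≤ s) {L : Finset G} (hL : L ∈ 𝓕) {χ : G →* ℂˣ}
    (hχ : χ ≠ 1) : (∑ y ∈ L, (χ y : ℂ)) * charSum (fun g => lineCount 𝓕 1 g) χ =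
      (∑ y ∈ L, (χ y : ℂ)) * (s + t + 1 - α : ℕ) := by
  classical
  calc (∑ y ∈ L, (χ y : ℂ)) * charSum (fun g => lineCount 𝓕 1 g) χ
      = ∑ x, ((∑ y ∈ L, lineCount 𝓕 x y : ℕ) : ℂ) * χ x := by
        push_cast
        simp only [Finset.sum_mul]
        rw [Finset.sum_comm]
        refine Finset.sum_congr rfl fun y _ => ?_
        rw [charSum, Finset.mul_sum]
        refine Fintype.sum_equiv (Equiv.mulLeft y) _ _ fun g => ?_
        rw [Equiv.coe_mulLeft, lineCount_comm 𝓕 (y * g), h.lineCount_eq_lineCount_one y,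
          inv_mul_cancel_left, map_mul, Units.val_mul]
        push_cast
        ring
    _ = (∑ y ∈ L, (χ y : ℂ)) * (s + t + 1 - α : ℕ) := by
        have hzero : ∑ x, (χ x : ℂ) = 0 := by rw [sum_coe_units_hom_eq_ite, if_neg hχ]
        simp only [h.sum_lineCount_eq_add_ite hα hL, Nat.cast_add, add_mul, Finset.sum_add_distrib,
          ← Finset.mul_sum, hzero, mul_zero, zero_add, Nat.cast_ite, ite_mul, Nat.cast_zero,
          zero_mul, Finset.sum_ite_mem, Finset.univ_inter]
        exact mul_comm _ _

theorem hasTwoValuedSpectrum (hα : α ≤ s) :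
    HasTwoValuedSpectrum (fun g => (lineCount 𝓕 1 g : ℤ)) (s + t + 1 - α) := by
  intro χ hχ
  by_contra! hne
  refine hne.1 ?_
  rw [charSum_lineCount]
  refine Finset.sum_eq_zero fun L hL => ?_
  exact (mul_eq_mul_left_iff.1
    (h.sum_char_mul_charSum_lineCount hα (Finset.mem_filter.1 hL).1 hχ)).resolve_left hne.2

theorem dvd_card_mul_lineCount_sub (hα : α ≤ s) (g : G) :
    ((s + t + 1 - α : ℕ) : ℤ) ∣
      Fintype.card G * lineCount 𝓕 1 g - ((s + 1) * (t + 1) : ℕ) := by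
  rw [← h.sum_univ_lineCount 1, Nat.cast_sum]
  exact (h.hasTwoValuedSpectrum hα).dvd_card_mul_sub_sum g

omit [Fintype G] in
theorem dvd_succ_mul_succ [Finite G] (ht : 0 < t) (hα : α < s) :
    s + t + 1 - α ∣ (s + 1) * (t + 1) := by
  have := Fintype.ofFinite G
  obtain ⟨g, hg⟩ := h.exists_lineCount_eq_zero ht hα
  have hdvd := h.dvd_card_mul_lineCount_sub hα.le g
  rw [hg, Nat.cast_zero, mul_zero, zero_sub, dvd_neg] at hdvd
  exact_mod_cast hdvd

theorem dvd_card (ht : 0 < t) (hα : α < s) : s + t + 1 - α ∣ Fintype.card G := by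
  obtain ⟨g, hg⟩ := h.exists_lineCount_eq_one (by omega)
  have hdvd := h.dvd_card_mul_lineCount_sub hα.le g
  rw [hg, Nat.cast_one, mul_one,
    dvd_sub_left (Int.natCast_dvd_natCast.2 (h.dvd_succ_mul_succ ht hα))] at hdvd
  exact_mod_cast hdvd

theorem subgroupCondition (ht : 0 < t) (hα : α < s) {p k : ℕ} (hp : p.Prime)
    (hdvd : p ^ k ∣ Fintype.card G) :
    SubgroupCondition (t + 1) ((s + 1) * (t + 1) / (s + t + 1 - α)) (s + t + 1 - α)
      (Fintype.card G) p (p ^ k) := by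
  refine (h.hasTwoValuedSpectrum hα.le).subgroupCondition ?_ (fun g hg => ?_) ?_ hp hdvd
  · rw [h.lineCount_self]
  · have := h.lineCount_le_one hg.symm
    interval_cases lineCount 𝓕 1 g <;> rfl
  · rw [← Nat.cast_sum, h.sum_univ_lineCount, ← Nat.cast_mul,
      Nat.mul_div_cancel' (h.dvd_succ_mul_succ ht hα)]

end Finite

end IsPGSinger

section Parametrization

theorem exists_factorization_of_mul_eq_mul {n h f w : ℕ} (hn : 0 < n) (heq : n * h = f * w) :
    ∃ a b c y, n = b * y ∧ h = a * c ∧ f = b * a ∧ w = y * c := by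
  obtain ⟨b, y, ⟨a, rfl⟩, ⟨c, rfl⟩, rfl⟩ := exists_dvd_and_dvd_of_dvd_mul (Dvd.intro _ heq)
  refine ⟨a, b, c, y, rfl, Nat.eq_of_mul_eq_mul_left hn ?_, rfl, rfl⟩
  rw [heq]
  ring

theorem exists_eq_mul_of_sub_dvd_mul {x n A : ℕ} (hn : 0 < n) (hA : A < x)
    (hdvd : (n + 1) * x - A ∣ x * (n * x)) :
    ∃ β w f h, x = (f * (β + w) + h) * (β + w) ∧ A = β * (f * (β + w) + h) ∧ n * h = f * w := by
  obtain ⟨x', β, hco, hx', hβ⟩ := Nat.exists_coprime x A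
  have hd : 0 < x.gcd A := Nat.gcd_pos_of_pos_left A (by omega)
  generalize x.gcd A = d at *
  subst hx' hβ
  obtain ⟨w, rfl⟩ := Nat.exists_eq_add_of_le (Nat.lt_of_mul_lt_mul_right hA).le
  set e := n * (β + w) + w
  have hδ : (n + 1) * ((β + w) * d) - β * d = d * e :=
    Nat.sub_eq_of_eq_add (by simp only [e]; ring)
  have he : e ∣ n * d * ((β + w) * (β + w)) := by
    refine Nat.dvd_of_mul_dvd_mul_left hd ?_
    rw [← hδ]
    convert hdvd using 1
    ring
  have hco_e : e.Coprime (β + w) := by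
    simp only [e, Nat.coprime_mul_right_add_left]
    simpa [Nat.coprime_comm] using hco
  obtain ⟨f, hf⟩ := (hco_e.mul_right hco_e).dvd_of_dvd_mul_right he
  have hfd : f * (β + w) ≤ d := by
    refine Nat.le_of_mul_le_mul_right (c := n) ?_ hn
    calc f * (β + w) * n ≤ e * f := by simp only [e]; nlinarith [Nat.zero_le (w * f)]
      _ = d * n := by rw [← hf, mul_comm]
  obtain ⟨h, rfl⟩ := Nat.exists_eq_add_of_le hfd
  refine ⟨β, w, f, h, mul_comm _ _, rfl, ?_⟩
  simp only [e] at hf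
  linarith

theorem exists_parametrization_of_sub_dvd_mul {x n A : ℕ} (hn : 0 < n) (hA₀ : 0 < A) (hA : A < x)
    (hdvd : (n + 1) * x - A ∣ x * (n * x)) :
    ∃ β > 0, ∃ c > 0, ∃ y > 0, ∃ b > 0, ∃ a > 0, n = b * y ∧
      x = a * (b * (β + c * y) + c) * (β + c * y) ∧ A = β * (a * (b * (β + c * y) + c)) := by
  obtain ⟨β, w, f, h, hx, hAβ, heq⟩ := exists_eq_mul_of_sub_dvd_mul hn hA hdvd
  obtain ⟨a, b, c, y, rfl, rfl, rfl, rfl⟩ := exists_factorization_of_mul_eq_mul hn heq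
  have hfactor : b * a * (β + y * c) + a * c = a * (b * (β + c * y) + c) := by ring
  rw [hfactor, mul_comm y c] at hx
  rw [hfactor] at hAβ
  have hβ : 0 < β := Nat.pos_of_ne_zero fun h0 => by simp [hAβ, h0] at hA₀
  have ha : 0 < a := Nat.pos_of_ne_zero fun h0 => by simp [hAβ, h0] at hA₀
  have hc : 0 < c := Nat.pos_of_ne_zero fun h0 => by
    rw [hx, hAβ, h0, zero_mul, add_zero, mul_comm β] at hA
    exact lt_irrefl _ hA
  exact ⟨β, hβ, c, hc, y, Nat.pos_of_mul_pos_left hn, b, Nat.pos_of_mul_pos_right hn, a, ha,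
    rfl, hx, hAβ⟩

end Parametrization

section Search

/-- Bounded universal quantification over `1, …, n`, by structural recursion so that the kernel
evaluates it quickly. -/
def allUpTo : ℕ → (ℕ → Bool) → Bool
  | 0, _ => true
  | n + 1, P => allUpTo n P && P (n + 1)

/-- Bounded existential quantification over `1, …, n`, the counterpart of `allUpTo`. -/
def anyUpTo : ℕ → (ℕ → Bool) → Bool
  | 0, _ => false
  | n + 1, P => P (n + 1) || anyUpTo n P

theorem allUpTo_iff {n : ℕ} {P : ℕ → Bool} : allUpTo n P ↔ ∀ i > 0, i ≤ n → P i := by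
  induction n with
  | zero => simpa [allUpTo] using fun i hi h0 => absurd h0 hi.ne'
  | succ n ih =>
    rw [allUpTo, Bool.and_eq_true, ih]
    refine ⟨fun ⟨hle, hn⟩ i hi hin => ?_, fun h => ⟨fun i hi hin => h i hi (by omega), ?_⟩⟩
    · rcases Nat.of_le_succ hin with hin | rfl
      exacts [hle i hi hin, hn]
    · exact h (n + 1) n.succ_pos le_rfl

theorem anyUpTo_of_le {n i : ℕ} {P : ℕ → Bool} (hi : 0 < i) (hin : i ≤ n) (hP : P i) :
    anyUpTo n P := by
  induction n with
  | zero => omega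
  | succ n ih =>
    rw [anyUpTo, Bool.or_eq_true]
    rcases Nat.of_le_succ hin with hin | rfl
    exacts [.inr (ih hin), .inl hP]

/-- A test of `SubgroupCondition`, with the dispersion bound only for `u` near the mean of the
character sums divided by `π`, where it is sharpest. The range of `j` has length `δ.gcd P`; if that
is too long to be searched, the test is passed. -/
def subgroupTest (T w δ v p P : ℕ) : Bool :=
  let g := δ.gcd P
  let M := P / g
  let Q := v / P
  let π := δ / g
  Nat.blt 2048 g || anyUpTo g fun i =>
    let j := (w - 1) / M + i
    let K := π * j
    let u := (Q * T - K) / (π * (Q - 1))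
    Nat.beq ((M * j - w) % (p - 1)) 0 &&
      Nat.ble (π * (2 * u + 1) * (Q * T) + K ^ 2 + Q * T + π ^ 2 * (u * (u + 1)))
        (Q * (T ^ 2 + K + π ^ 2 * (u * (u + 1))) + π * (2 * u + 1) * K)

theorem SubgroupCondition.subgroupTest {T w δ v p P : ℕ} (h : SubgroupCondition T w δ v p P)
    (hw : 0 < w) (hP : 0 < P) : subgroupTest T w δ v p P := by
  obtain ⟨j, hj, hj', hdvd, hdisp⟩ := h
  have hMg : P / δ.gcd P * δ.gcd P = P := Nat.div_mul_cancel (Nat.gcd_dvd_right δ P)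
  have hM : 0 < P / δ.gcd P := Nat.pos_of_mul_pos_right (hMg ▸ hP)
  have hlt : (w - 1) / (P / δ.gcd P) < j := (Nat.div_lt_iff_lt_mul hM).2 (by rw [mul_comm]; omega)
  have hle : j ≤ (w - 1) / (P / δ.gcd P) + δ.gcd P := by
    rw [← Nat.add_mul_div_left _ _ hM, hMg, Nat.le_div_iff_mul_le hM, mul_comm]
    omega
  obtain ⟨i, rfl⟩ := Nat.exists_eq_add_of_lt hlt
  rw [_root_.subgroupTest, Bool.or_eq_true]
  refine .inr (anyUpTo_of_le (i := i + 1) i.succ_pos (by omega) ?_)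
  rw [Bool.and_eq_true, Nat.beq_eq, Nat.ble_eq]
  exact ⟨Nat.mod_eq_zero_of_dvd hdvd, hdisp _⟩

/-- The primes below `1000`, sieved by trial division up to `31`. The search never needs larger
ones. -/
def smallPrimes : List ℕ :=
  (List.range 1000).filter fun p => Nat.blt 1 p &&
    allUpTo 31 fun d => Nat.ble d 1 || Nat.blt p (d * d) || !Nat.beq (p % d) 0

theorem prime_of_mem_smallPrimes {p : ℕ} (hp : p ∈ smallPrimes) : p.Prime := by
  obtain ⟨hlt, hp⟩ := List.mem_filter.1 hp
  rw [List.mem_range] at hlt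
  simp only [Bool.and_eq_true, allUpTo_iff, Bool.or_eq_true, Nat.blt_eq, Nat.ble_eq,
    Bool.not_eq_true', ← Bool.not_eq_true, Nat.beq_eq] at hp
  obtain ⟨hp1, hp⟩ := hp
  by_contra hnot
  have hsq := Nat.minFac_sq_le_self (by omega) hnot
  have hmin := (Nat.minFac_prime hp1.ne').two_le
  rcases hp p.minFac (by omega) (by nlinarith) with (h | h) | h
  · omega
  · rw [sq] at hsq
    omega
  · exact h (Nat.mod_eq_zero_of_dvd p.minFac_dvd)

/-- `subgroupTest` at the prime powers dividing `v`, up to a bound. -/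
def primePowerTest (T w δ v : ℕ) : Bool :=
  smallPrimes.all fun p => !Nat.beq (v % p) 0 || allUpTo 20 fun k =>
    let P := p ^ k
    !Nat.beq (v % P) 0 || subgroupTest T w δ v p P

theorem primePowerTest_of_forall_subgroupCondition {T w δ v : ℕ} (hw : 0 < w)
    (h : ∀ p k : ℕ, p.Prime → p ^ k ∣ v → SubgroupCondition T w δ v p (p ^ k)) :
    primePowerTest T w δ v := by
  rw [primePowerTest, List.all_eq_true]
  intro p hp
  have hp := prime_of_mem_smallPrimes hp
  rw [Bool.or_eq_true, allUpTo_iff]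
  refine .inr fun k _ _ => ?_
  by_cases hv : p ^ k ∣ v
  · rw [Bool.or_eq_true]
    exact .inr ((h p k hp hv).subgroupTest hw (pow_pos hp.pos k))
  · rw [Bool.or_eq_true, Bool.not_eq_true', ← Bool.not_eq_true, Nat.beq_eq]
    exact .inl fun h0 => hv (Nat.dvd_of_mod_eq_zero h0)

/-- The triples `(s + 1, (t + 1) / (s + 1), α)` of the classification. -/
def listedParameters : List (ℕ × ℕ × ℕ) :=
  [(6, 1, 2), (12, 2, 3), (40, 1, 15), (273, 1, 104), (2296, 2, 615)]

/-- The conditions for `s + 1 = x`, `t + 1 = n * x` and `α` either fail or hold for a listed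
triple. Here `α * |G| = m` and `s + t + 1 - α = δ`. -/
def isListedOrFails (x n α : ℕ) : Bool :=
  let m := x * ((x - 1) * (n * x - 1) + α)
  let δ := (n + 1) * x - (α + 1)
  !Nat.beq (m % α) 0 || !Nat.beq (m / α % δ) 0 || listedParameters.contains (x, n, α) ||
    !primePowerTest (n * x) (x * (n * x) / δ) δ (m / α)

/-- `isListedOrFails` at all parameters `(x, n, α)` with `α + 1 ≤ N` which have the form given by
`exists_parametrization_of_sub_dvd_mul` for the given `β`. -/
def search (N β : ℕ) : Bool :=
  let B := N / β
  allUpTo B fun c => allUpTo ((B - β) / c) fun y =>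
    let x' := β + c * y
    allUpTo ((B - c) / x') fun b =>
      let z := b * x' + c
      allUpTo (B / z) fun a =>
        let d := a * z
        isListedOrFails (d * x') (b * y) (β * d - 1)

theorem isListedOrFails_of_search {N β c y b a : ℕ} (hsearch : search N β) (hβ : 0 < β)
    (hc : 0 < c) (hy : 0 < y) (hb : 0 < b) (ha : 0 < a)
    (hle : β * (a * (b * (β + c * y) + c)) ≤ N) :
    isListedOrFails (a * (b * (β + c * y) + c) * (β + c * y)) (b * y)
      (β * (a * (b * (β + c * y) + c)) - 1) := by
  simp only [search, allUpTo_iff] at hsearch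
  have hz : 0 < b * (β + c * y) + c := by omega
  have haz : a * (b * (β + c * y) + c) ≤ N / β := (Nat.le_div_iff_mul_le hβ).2 (by rwa [mul_comm])
  have hzB : b * (β + c * y) + c ≤ N / β := (Nat.le_mul_of_pos_left _ ha).trans haz
  have hxb : β + c * y ≤ b * (β + c * y) := Nat.le_mul_of_pos_left _ hb
  exact hsearch c hc (by omega) y hy ((Nat.le_div_iff_mul_le hc).2 (by rw [mul_comm]; omega)) b hb
    ((Nat.le_div_iff_mul_le (by omega)).2 (by omega)) a ha ((Nat.le_div_iff_mul_le hz).2 haz)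

theorem mem_listedParameters_of_isListedOrFails {x n α v : ℕ} (h : isListedOrFails x n α)
    (hα : 0 < α) (hv : α * v = x * ((x - 1) * (n * x - 1) + α))
    (hδ : (n + 1) * x - (α + 1) ∣ v) (hpos : 0 < x * (n * x) / ((n + 1) * x - (α + 1)))
    (hcond : ∀ p k : ℕ, p.Prime → p ^ k ∣ v →
      SubgroupCondition (n * x) (x * (n * x) / ((n + 1) * x - (α + 1))) ((n + 1) * x - (α + 1)) v p
        (p ^ k)) :
    (x, n, α) ∈ listedParameters := by
  have htest := primePowerTest_of_forall_subgroupCondition hpos hcond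
  simpa [isListedOrFails, ← hv, Nat.mul_div_cancel_left _ hα, Nat.mod_eq_zero_of_dvd hδ, htest]
    using h

theorem search_one : search 1001 1 := by decide +kernel

theorem search_of_two_le : (allUpTo 31 fun β => Nat.ble β 1 || search 1001 β) := by
  decide +kernel

theorem search_of_lt {β : ℕ} (hβ : 0 < β) (hlt : β < 32) : search 1001 β := by
  rcases Nat.eq_or_lt_of_le hβ with rfl | hβ'
  · exact search_one
  · have h := allUpTo_iff.1 search_of_two_le β hβ (by omega)
    rw [Bool.or_eq_true, Nat.ble_eq] at h
    exact h.resolve_left (by omega)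

theorem isListedOrFails_of_sub_dvd_mul {x n α : ℕ} (hn : 0 < n) (hα : α ≤ 1000) (hx : α + 1 < x)
    (hdvd : (n + 1) * x - (α + 1) ∣ x * (n * x)) : isListedOrFails x n α := by
  obtain ⟨β, hβ, c, hc, y, hy, b, hb, a, ha, rfl, rfl, hA⟩ :=
    exists_parametrization_of_sub_dvd_mul hn α.succ_pos hx hdvd
  have hle : β * (a * (b * (β + c * y) + c)) ≤ 1001 := by omega
  have hβa : β ≤ a * (b * (β + c * y) + c) := by
    have h1 : b * (β + c * y) + c ≤ a * (b * (β + c * y) + c) := Nat.le_mul_of_pos_left _ ha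
    have h2 : β + c * y ≤ b * (β + c * y) := Nat.le_mul_of_pos_left _ hb
    omega
  have hlt : β < 32 := by nlinarith
  have h := isListedOrFails_of_search (search_of_lt hβ hlt) hβ hc hy hb ha hle
  rwa [← hA] at h

end Search

theorem IsPGSinger.finite {G : Type*} [CommGroup G] [DecidableEq G] {𝓛 : Set (Finset G)}
    {s t α : ℕ} (h : IsPGSinger G 𝓛 s t α) (hα : 0 < α) : Finite G := by
  have hfin (x : G) : {L | L ∈ 𝓛 ∧ x ∈ L}.Finite :=
    Set.finite_of_ncard_pos (h.point_deg x ▸ t.succ_pos)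
  obtain ⟨L, hL, -⟩ := Set.nonempty_of_ncard_ne_zero ((h.point_deg 1).trans_ne t.succ_ne_zero)
  have hcover : Set.univ ⊆ ⋃ y ∈ L, ⋃ M ∈ {M | M ∈ 𝓛 ∧ y ∈ M}, (M : Set G) := by
    intro x _
    simp only [Set.mem_iUnion]
    by_cases hx : x ∈ L
    · exact ⟨x, hx, L, ⟨hL, hx⟩, hx⟩
    · obtain ⟨M, hM, hxM, y, hyL, hyM⟩ :=
        Set.nonempty_of_ncard_ne_zero (h.alpha_ax x L hL hx ▸ hα.ne')
      exact ⟨y, hyL, M, ⟨hM, hyM⟩, hxM⟩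
  refine Set.finite_univ_iff.1 (Set.Finite.subset ?_ hcover)
  exact L.finite_toSet.biUnion fun y _ => (hfin y).biUnion fun M _ => M.finite_toSet

theorem IsPGSinger.mem_listedParameters {G : Type*} [CommGroup G] [Finite G] [DecidableEq G]
    {𝓕 : Finset (Finset G)} {s t α n : ℕ} (h : IsPGSinger G (𝓕 : Set (Finset G)) s t α)
    (hα0 : 0 < α) (hα : α ≤ 1000) (hαs : α < s) (hn : t + 1 = n * (s + 1)) :
    (s + 1, n, α) ∈ listedParameters := by
  have := Fintype.ofFinite G
  have hn0 : 0 < n := Nat.pos_of_ne_zero fun h0 => by simp [h0] at hn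
  have hst : s + 1 ≤ t + 1 := hn ▸ Nat.le_mul_of_pos_left _ hn0
  have ht : 0 < t := by omega
  have hδ : s + t + 1 - α = (n + 1) * (s + 1) - (α + 1) := by
    rw [add_one_mul, ← hn]
    omega
  have hcard := h.mul_card_eq hαs.le
  have hdvd := h.dvd_succ_mul_succ ht hαs
  have hpos : 0 < (s + 1) * (t + 1) / (s + t + 1 - α) :=
    Nat.div_pos (Nat.le_of_dvd (by positivity) hdvd) (by omega)
  have hv := h.dvd_card ht hαs
  have hcond := fun p k => h.subgroupCondition ht hαs (p := p) (k := k)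
  rw [hδ, hn] at hdvd hpos hcond
  rw [hδ] at hv
  refine mem_listedParameters_of_isListedOrFails
    (isListedOrFails_of_sub_dvd_mul hn0 hα (by omega) hdvd) hα0 ?_ hv hpos hcond
  rw [hcard, ← hn, Nat.add_sub_cancel, Nat.add_sub_cancel]

theorem rigid_type_classification_alpha_le_1000_general
    {G : Type*} [CommGroup G] [DecidableEq G] {s t α : ℕ} (hα0 : 0 < α) (hα : α ≤ 1000)
    (hαs : α < s) {𝓛 : Set (Finset G)} (hpg : IsPGSinger G 𝓛 s t α) (hrig : RigidType G 𝓛) :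
    (s, t, α) = (5, 5, 2) ∨ (s, t, α) = (11, 23, 3) ∨ (s, t, α) = (39, 39, 15) ∨
      (s, t, α) = (272, 272, 104) ∨ (s, t, α) = (2295, 4591, 615) := by
  have := hpg.finite hα0
  lift 𝓛 to Finset (Finset G) using 𝓛.toFinite
  obtain ⟨n, hn⟩ := hpg.succ_dvd_succ_of_rigidType hrig
  rw [mul_comm] at hn
  have hmem := hpg.mem_listedParameters hα0 hα hαs hn
  simp only [listedParameters, List.mem_cons, List.not_mem_nil, or_false, Prod.mk.injEq] at hmem ⊢
  rcases hmem with ⟨hs, rfl, rfl⟩ | ⟨hs, rfl, rfl⟩ | ⟨hs, rfl, rfl⟩ | ⟨hs, rfl, rfl⟩ |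
    ⟨hs, rfl, rfl⟩ <;> omega

/-- a proper `pg(s,t,α)` of rigid type with abelian Singer group and
`α ≤ 1000` must have parameters `(5,5,2)`, `(11,23,3)`, `(39,39,15)`, `(272,272,104)` or
`(2295,4591,615)`. -/
theorem rigid_type_classification_alpha_le_1000
    (G : Type*) [CommGroup G] [Fintype G] [DecidableEq G]
    (s t α : ℕ) (hα2 : 2 ≤ α) (hα1000 : α ≤ 1000) (hαs : α < s) (hαt : α < t)
    (𝓛 : Set (Finset G)) (hpg : IsPGSinger G 𝓛 s t α) (hrig : RigidType G 𝓛) :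
    (s, t, α) = (5, 5, 2) ∨ (s, t, α) = (11, 23, 3) ∨ (s, t, α) = (39, 39, 15) ∨
      (s, t, α) = (272, 272, 104) ∨ (s, t, α) = (2295, 4591, 615) :=
  rigid_type_classification_alpha_le_1000_general (by omega) hα1000 hαs hpg hrig
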